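/- Let d ≥ 2, let X be a random vector in ℝ^d distributed according to the multivariate Gaussian law with mean vector m and positive definite covariance matrix Σ, and let r ≥ |m|. Set c = (tr Σ − λ_max(Σ))/(r + (tr Σ)^{1/2}). Then E|(1 − c/|X|)·X − m|² ≤ E|X − m|² − c². -/

import Mathlib

open Real MeasureTheory

/-- The multivariate Gaussian measure on `ℝ^d` (with the Euclidean structure), with mean
vector `m` and (positive definite) covariance matrix `S`, defined via its density with
respect to the Lebesgue measure. -/
noncomputable def multiGaussian (d : ℕ) (m : EuclideanSpace ℝ (Fin d))
    (S : Matrix (Fin d) (Fin d) ℝ) : Measure (EuclideanSpace ℝ (Fin d)) :=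
  volume.withDensity fun x => ENNReal.ofReal
    ((2 * Real.pi) ^ (-(d : ℝ) / 2) * S.det ^ (-(1 : ℝ) / 2) *
      Real.exp (-(∑ i, ∑ k, (x i - m i) * S⁻¹ i k * (x k - m k)) / 2))

/-!
Stein's identity for the smoothed direction `x / √(‖x‖² + δ²)` expresses
`E⟪X / √(‖X‖² + δ²), X - m⟫` as the expectation of the trace of its derivative composed with `Σ`,
and this trace is at least `(tr Σ - λ_max(Σ)) / √(‖X‖² + δ²)`. By Jensen's inequality and
`E‖X‖ ≤ ‖m‖ + √(tr Σ)`, letting `δ → 0` gives `E⟪X / ‖X‖, X - m⟫ ≥ c`, so that expanding the square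
yields a risk of at most `E‖X - m‖² - 2c · c + c²`.
-/

open ProbabilityTheory Module Filter
open Matrix (toEuclideanCLM)
open scoped RealInnerProductSpace MatrixOrder Topology

section StdGaussian

variable {E : Type*} [NormedAddCommGroup E] [InnerProductSpace ℝ E]

/-- The density of the standard Gaussian law of `E` with respect to the Lebesgue measure. -/
noncomputable def stdGaussianPDF (x : E) : ℝ :=
  (2 * π) ^ (-(finrank ℝ E : ℝ) / 2) * exp (-‖x‖ ^ 2 / 2)

lemma stdGaussianPDF_nonneg (x : E) : 0 ≤ stdGaussianPDF x := by
  unfold stdGaussianPDF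
  positivity

@[fun_prop]
lemma continuous_stdGaussianPDF : Continuous (stdGaussianPDF : E → ℝ) := by
  unfold stdGaussianPDF
  fun_prop

lemma hasFDerivAt_stdGaussianPDF (x : E) :
    HasFDerivAt stdGaussianPDF (-(stdGaussianPDF x • innerSL ℝ x)) x := by
  have hexp : HasFDerivAt (fun y : E ↦ exp (-1 / 2 * ‖y‖ ^ 2)) _ x :=
    ((hasStrictFDerivAt_norm_sq x).hasFDerivAt.const_mul (-1 / 2)).exp
  have hpdf : stdGaussianPDF =
      fun y : E ↦ (2 * π) ^ (-(finrank ℝ E : ℝ) / 2) * exp (-1 / 2 * ‖y‖ ^ 2) := by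
    ext y
    rw [stdGaussianPDF]
    ring_nf
  rw [hpdf]
  refine (hexp.const_mul _).congr_fderiv ?_
  ext v
  simp only [smul_apply, neg_apply, smul_eq_mul, nsmul_eq_mul, Nat.cast_ofNat]
  ring

variable [MeasurableSpace E] [BorelSpace E]

lemma measurable_ofReal_stdGaussianPDF :
    Measurable fun x : E ↦ ENNReal.ofReal (stdGaussianPDF x) :=
  continuous_stdGaussianPDF.measurable.ennreal_ofReal

variable [FiniteDimensional ℝ E]

lemma integral_stdGaussianPDF_mul_cexp_inner (t : E) :
    ∫ x, (stdGaussianPDF x : ℂ) * Complex.exp (⟪x, t⟫ * Complex.I) =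
      Complex.exp (-‖t‖ ^ 2 / 2) := by
  have hfourier := GaussianFourier.integral_cexp_neg_mul_sq_norm_add (V := E) (b := 1 / 2)
    (by norm_num) Complex.I t
  have hnormalization : (2 * π : ℂ) ^ (-(finrank ℝ E : ℂ) / 2) *
      (2 * π : ℂ) ^ ((finrank ℝ E : ℂ) / 2) = 1 := by
    rw [← Complex.cpow_add _ _ (by simp [pi_ne_zero]), neg_div, neg_add_cancel, Complex.cpow_zero]
  have hintegrand (x : E) : (stdGaussianPDF x : ℂ) * Complex.exp (⟪x, t⟫ * Complex.I) =
      (2 * π : ℂ) ^ (-(finrank ℝ E : ℂ) / 2) *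
        Complex.exp (-(1 / 2) * ‖x‖ ^ 2 + Complex.I * ⟪t, x⟫) := by
    rw [stdGaussianPDF, Complex.ofReal_mul, Complex.ofReal_cpow (by positivity), mul_assoc,
      Complex.ofReal_exp, ← Complex.exp_add, real_inner_comm]
    push_cast
    ring_nf
  simp only [hintegrand, integral_const_mul, hfourier]
  rw [show (π : ℂ) / (1 / 2) = 2 * π by ring, ← mul_assoc, hnormalization, one_mul, Complex.I_sq]
  ring_nf

lemma integrable_stdGaussianPDF : Integrable (stdGaussianPDF : E → ℝ) := by
  have hint : Integrable fun x : E ↦ (stdGaussianPDF x : ℂ) * Complex.exp (⟪x, 0⟫ * Complex.I) :=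
    .of_integral_ne_zero <| by
      rw [integral_stdGaussianPDF_mul_cexp_inner]
      exact Complex.exp_ne_zero _
  simpa using hint.re

lemma withDensity_stdGaussianPDF :
    volume.withDensity (fun x : E ↦ ENNReal.ofReal (stdGaussianPDF x)) = stdGaussian E := by
  have : IsFiniteMeasure (volume.withDensity (fun x : E ↦ ENNReal.ofReal (stdGaussianPDF x))) :=
    isFiniteMeasure_withDensity_ofReal integrable_stdGaussianPDF.2
  refine Measure.ext_of_charFun (funext fun t ↦ ?_)
  rw [charFun_stdGaussian, charFun_apply, ← integral_stdGaussianPDF_mul_cexp_inner t,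
    integral_withDensity_eq_integral_toReal_smul measurable_ofReal_stdGaussianPDF (by simp)]
  simp [ENNReal.toReal_ofReal (stdGaussianPDF_nonneg _)]

lemma integral_stdGaussian (f : E → ℝ) :
    ∫ x, f x ∂stdGaussian E = ∫ x, f x * stdGaussianPDF x := by
  rw [← withDensity_stdGaussianPDF,
    integral_withDensity_eq_integral_toReal_smul measurable_ofReal_stdGaussianPDF (by simp)]
  simp only [ENNReal.toReal_ofReal (stdGaussianPDF_nonneg _), smul_eq_mul, mul_comm]

lemma integrable_stdGaussian_iff {f : E → ℝ} :
    Integrable f (stdGaussian E) ↔ Integrable (fun x ↦ f x * stdGaussianPDF x) := by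
  rw [← withDensity_stdGaussianPDF,
    integrable_withDensity_iff_integrable_smul' measurable_ofReal_stdGaussianPDF (by simp)]
  simp only [ENNReal.toReal_ofReal (stdGaussianPDF_nonneg _), smul_eq_mul, mul_comm]

lemma integral_mul_inner_stdGaussian {f : E → ℝ} {f' : E → E →L[ℝ] ℝ} {v : E}
    (hf : ∀ x, HasFDerivAt f (f' x) x) (hfi : Integrable f (stdGaussian E))
    (hfv : Integrable (fun x ↦ f x * ⟪v, x⟫) (stdGaussian E))
    (hf' : Integrable (fun x ↦ f' x v) (stdGaussian E)) :
    ∫ x, f x * ⟪v, x⟫ ∂stdGaussian E = ∫ x, f' x v ∂stdGaussian E := by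
  have hpdf' (x : E) : f x * (-(stdGaussianPDF x • innerSL ℝ x)) v =
      -(f x * ⟪v, x⟫ * stdGaussianPDF x) := by
    simp only [neg_apply, smul_apply, innerSL_apply_apply, smul_eq_mul,
      real_inner_comm v]
    ring
  rw [integrable_stdGaussian_iff] at hfi hfv hf'
  have hparts := integral_bilinear_hasFDerivAt_right_eq_neg_left_of_integrable
    (B := ContinuousLinearMap.mul ℝ ℝ) (μ := (volume : Measure E)) (v := v) hf'
    (by simpa only [ContinuousLinearMap.mul_apply', hpdf'] using hfv.fun_neg) hfi
    (fun x _ ↦ hf x) (fun x _ ↦ hasFDerivAt_stdGaussianPDF x)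
  simp only [ContinuousLinearMap.mul_apply', hpdf', integral_neg, neg_inj] at hparts
  rw [integral_stdGaussian, integral_stdGaussian, hparts]

theorem integral_inner_self_stdGaussian {F : E → E} {F' : E → E →L[ℝ] E}
    (hF : ∀ x, HasFDerivAt F (F' x) x) (hF2 : MemLp F 2 (stdGaussian E))
    (hF' : Integrable F' (stdGaussian E)) :
    ∫ x, ⟪F x, x⟫ ∂stdGaussian E = ∫ x, LinearMap.trace ℝ E (F' x) ∂stdGaussian E := by
  set b := stdOrthonormalBasis ℝ E
  have hcoord (v : E) : Integrable (fun x ↦ ⟪v, F x⟫ * ⟪v, x⟫) (stdGaussian E) :=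
    (hF2.const_inner v).integrable_mul (IsGaussian.memLp_two_id.const_inner v)
  have hderiv (v : E) : Integrable (fun x ↦ ⟪v, F' x v⟫) (stdGaussian E) :=
    (hF'.apply_continuousLinearMap v).const_inner v
  calc ∫ x, ⟪F x, x⟫ ∂stdGaussian E
      = ∫ x, ∑ i, ⟪b i, F x⟫ * ⟪b i, x⟫ ∂stdGaussian E := by
        simp only [real_inner_comm (F _) (b _), b.sum_inner_mul_inner]
    _ = ∑ i, ∫ x, ⟪b i, F x⟫ * ⟪b i, x⟫ ∂stdGaussian E :=
        integral_finsetSum _ fun i _ ↦ hcoord (b i)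
    _ = ∑ i, ∫ x, ⟪b i, F' x (b i)⟫ ∂stdGaussian E := by
        exact Finset.sum_congr rfl fun i _ ↦ integral_mul_inner_stdGaussian
          (fun x ↦ (innerSL ℝ (b i)).hasFDerivAt.comp x (hF x))
          ((hF2.const_inner (b i)).integrable one_le_two) (hcoord (b i)) (hderiv (b i))
    _ = ∫ x, ∑ i, ⟪b i, F' x (b i)⟫ ∂stdGaussian E :=
        (integral_finsetSum _ fun i _ ↦ hderiv (b i)).symm
    _ = ∫ x, LinearMap.trace ℝ E (F' x) ∂stdGaussian E := by
        simp only [LinearMap.trace_eq_sum_inner _ b, ContinuousLinearMap.coe_coe]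

end StdGaussian

section SmoothNorm

variable {E : Type*} [NormedAddCommGroup E] {δ : ℝ}

/-- An approximation of the norm, smooth for `δ ≠ 0` and equal to the norm for `δ = 0`. -/
noncomputable def smoothNorm (δ : ℝ) (x : E) : ℝ := √(‖x‖ ^ 2 + δ ^ 2)

lemma smoothNorm_pos (hδ : δ ≠ 0) (x : E) : 0 < smoothNorm δ x :=
  sqrt_pos.mpr (by positivity)

lemma smoothNorm_nonneg (δ : ℝ) (x : E) : 0 ≤ smoothNorm δ x :=
  sqrt_nonneg _

lemma norm_le_smoothNorm (δ : ℝ) (x : E) : ‖x‖ ≤ smoothNorm δ x :=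
  le_sqrt_of_sq_le (le_add_of_nonneg_right (sq_nonneg δ))

lemma smoothNorm_le_norm_add_abs (δ : ℝ) (x : E) : smoothNorm δ x ≤ ‖x‖ + |δ| := by
  refine sqrt_le_iff.mpr ⟨by positivity, ?_⟩
  nlinarith [sq_abs δ, mul_nonneg (norm_nonneg x) (abs_nonneg δ)]

lemma le_smoothNorm (δ : ℝ) (x : E) : δ ≤ smoothNorm δ x :=
  le_sqrt_of_sq_le (le_add_of_nonneg_left (sq_nonneg ‖x‖))

@[fun_prop]
lemma continuous_smoothNorm (δ : ℝ) : Continuous (smoothNorm δ : E → ℝ) := by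
  unfold smoothNorm
  fun_prop

end SmoothNorm

section SmoothUnit

variable {E : Type*} [NormedAddCommGroup E] [InnerProductSpace ℝ E] {δ : ℝ}

/-- A smooth approximation of the direction `x / ‖x‖` whose derivative is bounded, so that Stein's
identity applies to it. For `δ = 0` it takes the value `0` at the origin. -/
noncomputable def smoothUnit (δ : ℝ) (x : E) : E := (smoothNorm δ x)⁻¹ • x

/-- The Fréchet derivative of `smoothUnit δ` at `x`. -/
noncomputable def smoothUnitFDeriv (δ : ℝ) (x : E) : E →L[ℝ] E :=
  (smoothNorm δ x)⁻¹ • ContinuousLinearMap.id ℝ E -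
    (smoothNorm δ x ^ 3)⁻¹ • InnerProductSpace.rankOne ℝ x x

lemma smoothUnit_zero_left (x : E) : smoothUnit 0 x = ‖x‖⁻¹ • x := by
  simp [smoothUnit, smoothNorm]

lemma hasFDerivAt_smoothNorm (hδ : δ ≠ 0) (x : E) :
    HasFDerivAt (smoothNorm δ) ((smoothNorm δ x)⁻¹ • innerSL ℝ x) x := by
  have hpos : 0 < ‖x‖ ^ 2 + δ ^ 2 := by positivity
  refine (((hasStrictFDerivAt_norm_sq x).hasFDerivAt.add_const (δ ^ 2)).sqrt
    hpos.ne').congr_fderiv ?_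
  ext v
  simp [smoothNorm]
  ring

lemma hasFDerivAt_smoothUnit (hδ : δ ≠ 0) (x : E) :
    HasFDerivAt (smoothUnit δ) (smoothUnitFDeriv δ x) x := by
  have hinv : HasFDerivAt (fun y : E ↦ (smoothNorm δ y)⁻¹) _ x :=
    (hasDerivAt_inv (smoothNorm_pos hδ x).ne').comp_hasFDerivAt x (hasFDerivAt_smoothNorm hδ x)
  refine (hinv.smul (hasFDerivAt_id x)).congr_fderiv ?_
  ext v
  simp only [smoothUnitFDeriv, add_apply, sub_apply, smul_apply,
    ContinuousLinearMap.smulRight_apply, ContinuousLinearMap.id_apply, innerSL_apply_apply,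
    InnerProductSpace.rankOne_apply, smul_eq_mul, id_eq]
  module

lemma norm_smoothUnit_le_one (δ : ℝ) (x : E) : ‖smoothUnit δ x‖ ≤ 1 := by
  rw [smoothUnit, norm_smul, norm_inv, norm_of_nonneg (smoothNorm_nonneg δ x), inv_mul_eq_div]
  exact div_le_one_of_le₀ (norm_le_smoothNorm δ x) (smoothNorm_nonneg δ x)

lemma norm_inner_smoothUnit_le (δ : ℝ) (x y : E) : ‖⟪smoothUnit δ x, y⟫‖ ≤ ‖y‖ :=
  (norm_inner_le_norm _ _).trans
    (mul_le_of_le_one_left (norm_nonneg _) (norm_smoothUnit_le_one δ x))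

lemma continuous_smoothUnitFDeriv (hδ : δ ≠ 0) :
    Continuous (smoothUnitFDeriv δ : E → E →L[ℝ] E) := by
  have hne (x : E) := (smoothNorm_pos hδ x).ne'
  have hrank : Continuous fun x : E ↦ InnerProductSpace.rankOne ℝ x x :=
    (InnerProductSpace.rankOne ℝ).continuous.clm_apply continuous_id
  unfold smoothUnitFDeriv
  fun_prop (disch := simp [hne])

lemma norm_smoothUnitFDeriv_le (hδ : 0 < δ) (x : E) : ‖smoothUnitFDeriv δ x‖ ≤ 2 / δ := by
  have hpos := smoothNorm_pos hδ.ne' x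
  have hrank : ‖x‖ * ‖x‖ ≤ smoothNorm δ x * smoothNorm δ x := by
    gcongr <;> exact norm_le_smoothNorm δ x
  calc ‖smoothUnitFDeriv δ x‖
      ≤ ‖(smoothNorm δ x)⁻¹ • ContinuousLinearMap.id ℝ E‖ +
        ‖(smoothNorm δ x ^ 3)⁻¹ • InnerProductSpace.rankOne ℝ x x‖ := norm_sub_le _ _
    _ = (smoothNorm δ x)⁻¹ * ‖ContinuousLinearMap.id ℝ E‖ +
        (smoothNorm δ x ^ 3)⁻¹ * (‖x‖ * ‖x‖) := by
      rw [norm_smul, norm_smul, InnerProductSpace.norm_rankOne, norm_of_nonneg (by positivity),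
        norm_of_nonneg (by positivity)]
    _ ≤ (smoothNorm δ x)⁻¹ * 1 +
        (smoothNorm δ x ^ 3)⁻¹ * (smoothNorm δ x * smoothNorm δ x) := by
      gcongr
      exact ContinuousLinearMap.norm_id_le
    _ = 2 / smoothNorm δ x := by field_simp; norm_num
    _ ≤ 2 / δ := by gcongr; exact le_smoothNorm δ x

lemma trace_smoothUnitFDeriv_comp [FiniteDimensional ℝ E] (δ : ℝ) (x : E) (T : E →L[ℝ] E) :
    LinearMap.trace ℝ E (smoothUnitFDeriv δ x ∘L T) =
      LinearMap.trace ℝ E T / smoothNorm δ x - ⟪x, T x⟫ / smoothNorm δ x ^ 3 := by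
  rw [smoothUnitFDeriv, ContinuousLinearMap.sub_comp, ContinuousLinearMap.smul_comp,
    ContinuousLinearMap.smul_comp, ContinuousLinearMap.id_comp, InnerProductSpace.rankOne_comp]
  simp [InnerProductSpace.trace_rankOne, ContinuousLinearMap.adjoint_inner_left, div_eq_inv_mul]

lemma tendsto_smoothUnit (x : E) : Tendsto (smoothUnit · x) (𝓝 0) (𝓝 (‖x‖⁻¹ • x)) := by
  obtain rfl | hx := eq_or_ne x 0
  · simp [smoothUnit]
  · have hcont : ContinuousAt (smoothUnit · x) 0 := by
      unfold smoothUnit smoothNorm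
      fun_prop (disch := simpa)
    simpa only [smoothUnit_zero_left] using hcont.tendsto

variable [MeasurableSpace E] [BorelSpace E] {μ : Measure E}

lemma integrable_smoothUnitFDeriv [FiniteDimensional ℝ E] [IsFiniteMeasure μ] (hδ : 0 < δ) :
    Integrable (smoothUnitFDeriv δ) μ :=
  .of_bound (continuous_smoothUnitFDeriv hδ.ne').aestronglyMeasurable (2 / δ)
    (.of_forall (norm_smoothUnitFDeriv_le hδ))

variable [SecondCountableTopology E]

lemma measurable_smoothUnit (δ : ℝ) : Measurable (smoothUnit δ : E → E) :=
  (continuous_smoothNorm δ).measurable.inv.smul measurable_id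

lemma memLp_smoothUnit [IsFiniteMeasure μ] (δ : ℝ) (p : ENNReal) : MemLp (smoothUnit δ) p μ :=
  .of_bound (measurable_smoothUnit δ).aestronglyMeasurable 1 (.of_forall (norm_smoothUnit_le_one δ))

lemma integrable_inner_smoothUnit {g : E → E} (hg : Integrable g μ) (δ : ℝ) :
    Integrable (fun x ↦ ⟪smoothUnit δ x, g x⟫) μ :=
  hg.norm.mono' ((measurable_smoothUnit δ).aestronglyMeasurable.inner hg.aestronglyMeasurable)
    (.of_forall fun x ↦ norm_inner_smoothUnit_le δ x (g x))

lemma tendsto_integral_inner_smoothUnit {g : E → E} (hg : Integrable g μ) :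
    Tendsto (fun δ ↦ ∫ x, ⟪smoothUnit δ x, g x⟫ ∂μ) (𝓝 0) (𝓝 (∫ x, ⟪‖x‖⁻¹ • x, g x⟫ ∂μ)) :=
  tendsto_integral_filter_of_dominated_convergence (‖g ·‖)
    (.of_forall fun δ ↦ (integrable_inner_smoothUnit hg δ).aestronglyMeasurable)
    (.of_forall fun δ ↦ .of_forall fun x ↦ norm_inner_smoothUnit_le δ x (g x)) hg.norm
    (.of_forall fun x ↦ (tendsto_smoothUnit x).inner tendsto_const_nhds)

end SmoothUnit

section EuclideanMatrix

variable {ι : Type*} [Fintype ι] {S : Matrix ι ι ℝ}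

lemma trace_pos_of_posSemidef (hS : S.PosSemidef) (hS0 : S ≠ 0) : 0 < S.trace :=
  hS.trace_nonneg.lt_of_ne' (mt hS.trace_eq_zero_iff.mp hS0)

variable [DecidableEq ι]

lemma inner_toEuclideanCLM_self_le (hS : S.IsHermitian) (x : EuclideanSpace ℝ ι) :
    ⟪x, toEuclideanCLM (𝕜 := ℝ) S x⟫ ≤ (⨆ i, hS.eigenvalues i) * ‖x‖ ^ 2 := by
  have hle : S ≤ algebraMap ℝ (Matrix ι ι ℝ) (⨆ i, hS.eigenvalues i) := by
    rw [le_algebraMap_iff_spectrum_le hS.isSelfAdjoint, hS.spectrum_real_eq_range_eigenvalues]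
    rintro _ ⟨i, rfl⟩
    exact le_ciSup (Set.finite_range _).bddAbove i
  have hnonneg := (Matrix.le_iff.mp hle).dotProduct_mulVec_nonneg x.ofLp
  rw [star_trivial, ← Matrix.inner_toEuclideanCLM, map_sub, AlgHomClass.commutes] at hnonneg
  simpa [Algebra.algebraMap_eq_smul_one, inner_sub_right, inner_smul_right] using hnonneg

lemma iSup_eigenvalues_le_trace (hS : S.PosSemidef) : ⨆ i, hS.1.eigenvalues i ≤ S.trace := by
  rw [hS.1.trace_eq_sum_eigenvalues]
  exact Real.iSup_le
    (fun i ↦ Finset.single_le_sum (fun j _ ↦ hS.eigenvalues_nonneg j) (Finset.mem_univ i))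
    (Finset.sum_nonneg fun i _ ↦ hS.eigenvalues_nonneg i)

lemma trace_toEuclideanCLM (S : Matrix ι ι ℝ) :
    (toEuclideanCLM (𝕜 := ℝ) S : EuclideanSpace ℝ ι →ₗ[ℝ] EuclideanSpace ℝ ι).trace ℝ _ =
      S.trace := by
  simp [LinearMap.trace_eq_sum_inner _ (EuclideanSpace.basisFun ι ℝ), Matrix.trace,
    Matrix.inner_toEuclideanCLM]

lemma det_toEuclideanCLM_sqrt (hS : S.PosSemidef) :
    (toEuclideanCLM (𝕜 := ℝ) (CFC.sqrt S)).det = √S.det := by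
  rw [← RCLike.sqrt_real, ← hS.det_sqrt]
  exact LinearMap.det_toLpLin ..

lemma adjoint_toEuclideanCLM_sqrt (S : Matrix ι ι ℝ) :
    (toEuclideanCLM (𝕜 := ℝ) (CFC.sqrt S)).adjoint = toEuclideanCLM (𝕜 := ℝ) (CFC.sqrt S) :=
  ((CFC.sqrt_nonneg S).isSelfAdjoint.map (toEuclideanCLM (𝕜 := ℝ))).adjoint_eq

lemma toEuclideanCLM_sqrt_comp_adjoint (hS : S.PosSemidef) :
    toEuclideanCLM (𝕜 := ℝ) (CFC.sqrt S) ∘L (toEuclideanCLM (𝕜 := ℝ) (CFC.sqrt S)).adjoint =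
      toEuclideanCLM (𝕜 := ℝ) S := by
  rw [adjoint_toEuclideanCLM_sqrt, ← ContinuousLinearMap.mul_def, ← map_mul,
    CFC.sqrt_mul_sqrt_self S hS.nonneg]

lemma sqrt_mul_inv_mul_sqrt (hS : S.PosDef) : CFC.sqrt S * S⁻¹ * CFC.sqrt S = 1 := by
  have hsqrt := CFC.sqrt_mul_sqrt_self S hS.posSemidef.nonneg
  have hright : CFC.sqrt S * (CFC.sqrt S * S⁻¹) = 1 := by
    rw [← mul_assoc, hsqrt, Matrix.mul_nonsing_inv _ ((Matrix.isUnit_iff_isUnit_det _).1 hS.isUnit)]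
  exact mul_eq_one_comm.mp hright

lemma inner_toEuclideanCLM_inv_sqrt (hS : S.PosDef) (z : EuclideanSpace ℝ ι) :
    ⟪toEuclideanCLM (𝕜 := ℝ) (CFC.sqrt S) z,
      toEuclideanCLM (𝕜 := ℝ) S⁻¹ (toEuclideanCLM (𝕜 := ℝ) (CFC.sqrt S) z)⟫ = ‖z‖ ^ 2 := by
  rw [← ContinuousLinearMap.adjoint_inner_right, adjoint_toEuclideanCLM_sqrt,
    ← mul_apply_eq_comp, ← mul_apply_eq_comp, ← map_mul, ← map_mul,
    sqrt_mul_inv_mul_sqrt hS, map_one, one_apply_eq_self, real_inner_self_eq_norm_sq]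

end EuclideanMatrix

lemma map_withDensity_comp {α β : Type*} [MeasurableSpace α] [MeasurableSpace β] (μ : Measure α)
    {g : α → β} (hg : Measurable g) {f : β → ENNReal} (hf : Measurable f) :
    (μ.withDensity (f ∘ g)).map g = (μ.map g).withDensity f := by
  ext s hs
  rw [Measure.map_apply hg hs, withDensity_apply _ (hg hs), withDensity_apply _ hs,
    setLIntegral_map hs hf hg]
  rfl

lemma map_const_add_linearMap_volume {E : Type*} [NormedAddCommGroup E] [InnerProductSpace ℝ E]
    [FiniteDimensional ℝ E] [MeasurableSpace E] [BorelSpace E] (m : E) {A : E →L[ℝ] E}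
    (hA : A.det ≠ 0) :
    (volume : Measure E).map (fun x ↦ m + A x) = ENNReal.ofReal |A.det⁻¹| • volume := by
  have hmap : (volume : Measure E).map A = ENNReal.ofReal |A.det⁻¹| • volume :=
    Measure.map_linearMap_addHaar_eq_smul_addHaar volume hA
  have hcomp : (fun x ↦ m + A x) = (m + ·) ∘ A := rfl
  rw [hcomp, ← Measure.map_map (by fun_prop) A.continuous.measurable, hmap, Measure.map_smul,
    map_add_left_eq_self]

lemma inv_le_integral_inv {α : Type*} [MeasurableSpace α] {μ : Measure α} [IsProbabilityMeasure μ]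
    {f : α → ℝ} {a : ℝ} (hpos : ∀ x, 0 < f x) (hf : Integrable f μ)
    (hinv : Integrable (fun x ↦ (f x)⁻¹) μ) (ha : 0 < a) (hfa : ∫ x, f x ∂μ ≤ a) :
    a⁻¹ ≤ ∫ x, (f x)⁻¹ ∂μ := by
  -- `t⁻¹` lies above its tangent line at `a`.
  have htangent (x : α) : 2 * a⁻¹ - f x / a ^ 2 ≤ (f x)⁻¹ := by
    have hx := hpos x
    have hsq : (f x)⁻¹ - (2 * a⁻¹ - f x / a ^ 2) = (f x - a) ^ 2 / (f x * a ^ 2) := by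
      field_simp
      ring
    have : 0 ≤ (f x - a) ^ 2 / (f x * a ^ 2) := by positivity
    linarith
  calc a⁻¹ = 2 * a⁻¹ - a / a ^ 2 := by field_simp; ring
    _ ≤ 2 * a⁻¹ - (∫ x, f x ∂μ) / a ^ 2 := by gcongr
    _ = ∫ x, (2 * a⁻¹ - f x / a ^ 2) ∂μ := by
      rw [integral_sub (by fun_prop) (by fun_prop), integral_div]
      simp
    _ ≤ ∫ x, (f x)⁻¹ ∂μ := integral_mono (by fun_prop) hinv htangent

lemma integral_le_sqrt_integral_sq {α : Type*} [MeasurableSpace α] {μ : Measure α}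
    [IsProbabilityMeasure μ] {f : α → ℝ} (hf : MemLp f 2 μ) :
    ∫ x, f x ∂μ ≤ √(∫ x, f x ^ 2 ∂μ) := by
  refine le_sqrt_of_sq_le (sub_nonneg.mp ?_)
  simpa only [variance_eq_sub hf] using! variance_nonneg f μ

section AffineStein

lemma integrable_comp_comp {α E F G H : Type*} [MeasurableSpace α] {μ : Measure α}
    [NormedAddCommGroup E] [NormedSpace ℝ E] [NormedAddCommGroup F] [NormedSpace ℝ F]
    [NormedAddCommGroup G] [NormedSpace ℝ G] [NormedAddCommGroup H] [NormedSpace ℝ H]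
    {L : α → F →L[ℝ] G} (hL : Integrable L μ) (A : G →L[ℝ] H) (B : E →L[ℝ] F) :
    Integrable (fun x ↦ A ∘L L x ∘L B) μ :=
  (ContinuousLinearMap.compL ℝ E G H A).integrable_comp
    (((ContinuousLinearMap.compL ℝ E F G).flip B).integrable_comp hL)

lemma integrable_trace_comp {α E : Type*} [MeasurableSpace α] {μ : Measure α}
    [NormedAddCommGroup E] [InnerProductSpace ℝ E] [FiniteDimensional ℝ E] {L : α → E →L[ℝ] E}
    (hL : Integrable L μ) (T : E →L[ℝ] E) :
    Integrable (fun x ↦ LinearMap.trace ℝ E (L x ∘L T)) μ := by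
  simp only [LinearMap.trace_eq_sum_inner _ (stdOrthonormalBasis ℝ E)]
  exact integrable_finsetSum _ fun i _ ↦ (hL.apply_continuousLinearMap _).const_inner _

variable {E G : Type*}
  [NormedAddCommGroup E] [InnerProductSpace ℝ E] [FiniteDimensional ℝ E]
  [MeasurableSpace E] [BorelSpace E]
  [NormedAddCommGroup G] [InnerProductSpace ℝ G] [FiniteDimensional ℝ G]
  [MeasurableSpace G] [BorelSpace G]

theorem integral_inner_sub_map_stdGaussian {m : G} {A : E →L[ℝ] G} {F : G → G}
    {F' : G → G →L[ℝ] G} (hF : ∀ x, HasFDerivAt F (F' x) x)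
    (hF2 : MemLp F 2 ((stdGaussian E).map fun z ↦ m + A z))
    (hF' : Integrable F' ((stdGaussian E).map fun z ↦ m + A z)) :
    ∫ x, ⟪F x, x - m⟫ ∂(stdGaussian E).map (fun z ↦ m + A z) =
      ∫ x, LinearMap.trace ℝ G (F' x ∘L A ∘L A.adjoint)
        ∂(stdGaussian E).map (fun z ↦ m + A z) := by
  set g : E → G := fun z ↦ m + A z
  have hg : AEMeasurable g (stdGaussian E) := by fun_prop
  have hFg : MemLp (F ∘ g) 2 (stdGaussian E) := (memLp_map_measure_iff hF2.1 hg).mp hF2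
  have hF'g : Integrable (F' ∘ g) (stdGaussian E) := (integrable_map_measure hF'.1 hg).mp hF'
  have hderiv (z : E) :
      HasFDerivAt (fun z ↦ A.adjoint (F (g z))) (A.adjoint ∘L F' (g z) ∘L A) z :=
    A.adjoint.hasFDerivAt.comp z ((hF (g z)).comp z (A.hasFDerivAt.const_add m))
  have hcyclic (L : G →L[ℝ] G) : LinearMap.trace ℝ E (A.adjoint ∘L L ∘L A) =
      LinearMap.trace ℝ G (L ∘L A ∘L A.adjoint) := by
    simp only [ContinuousLinearMap.toLinearMap_comp]
    rw [LinearMap.trace_comp_comm', LinearMap.comp_assoc]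
  calc ∫ x, ⟪F x, x - m⟫ ∂(stdGaussian E).map g
      = ∫ z, ⟪F (g z), g z - m⟫ ∂stdGaussian E := integral_map hg (hF2.1.inner (by fun_prop))
    _ = ∫ z, ⟪A.adjoint (F (g z)), z⟫ ∂stdGaussian E := by
        simp only [g, add_sub_cancel_left, ContinuousLinearMap.adjoint_inner_left]
    _ = ∫ z, LinearMap.trace ℝ E (A.adjoint ∘L F' (g z) ∘L A) ∂stdGaussian E :=
        integral_inner_self_stdGaussian hderiv (A.adjoint.comp_memLp' hFg)
          (integrable_comp_comp hF'g A.adjoint A)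
    _ = ∫ z, LinearMap.trace ℝ G (F' (g z) ∘L A ∘L A.adjoint) ∂stdGaussian E := by
        simp only [hcyclic]
    _ = ∫ x, LinearMap.trace ℝ G (F' x ∘L A ∘L A.adjoint) ∂(stdGaussian E).map g :=
        (integral_map hg (integrable_trace_comp hF' _).1).symm

end AffineStein

section MultivariateGaussian

variable {ι : Type*} [Fintype ι] [DecidableEq ι] {m : EuclideanSpace ℝ ι} {S : Matrix ι ι ℝ}

theorem integral_inner_sub_multivariateGaussian (hS : S.PosSemidef)
    {F : EuclideanSpace ℝ ι → EuclideanSpace ℝ ι}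
    {F' : EuclideanSpace ℝ ι → EuclideanSpace ℝ ι →L[ℝ] EuclideanSpace ℝ ι}
    (hF : ∀ x, HasFDerivAt F (F' x) x) (hF2 : MemLp F 2 (multivariateGaussian m S))
    (hF' : Integrable F' (multivariateGaussian m S)) :
    ∫ x, ⟪F x, x - m⟫ ∂multivariateGaussian m S =
      ∫ x, LinearMap.trace ℝ (EuclideanSpace ℝ ι) (F' x ∘L toEuclideanCLM (𝕜 := ℝ) S)
        ∂multivariateGaussian m S := by
  rw [← toEuclideanCLM_sqrt_comp_adjoint hS]
  exact integral_inner_sub_map_stdGaussian hF hF2 hF'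

lemma memLp_sub_multivariateGaussian {p : ENNReal} (hp : p ≠ ⊤) :
    MemLp (fun x ↦ x - m) p (multivariateGaussian m S) :=
  (IsGaussian.memLp_id _ p hp).sub (memLp_const m)

lemma integral_norm_sub_sq_multivariateGaussian (hS : S.PosSemidef) :
    ∫ x, ‖x - m‖ ^ 2 ∂multivariateGaussian m S = S.trace := by
  have hstein := integral_inner_sub_multivariateGaussian (m := m) hS
    (fun x ↦ (hasFDerivAt_id x).sub_const m) (memLp_sub_multivariateGaussian (by simp))
    (integrable_const _)
  simpa [trace_toEuclideanCLM] using hstein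

lemma trace_sub_iSup_div_smoothNorm_le (hS : S.PosSemidef) {δ : ℝ} (hδ : δ ≠ 0)
    (x : EuclideanSpace ℝ ι) :
    (S.trace - ⨆ i, hS.1.eigenvalues i) / smoothNorm δ x ≤
      LinearMap.trace ℝ (EuclideanSpace ℝ ι)
        (smoothUnitFDeriv δ x ∘L toEuclideanCLM (𝕜 := ℝ) S) := by
  have hpos := smoothNorm_pos hδ x
  have hnonneg : 0 ≤ ⨆ i, hS.1.eigenvalues i := Real.iSup_nonneg hS.eigenvalues_nonneg
  have hinner : ⟪x, toEuclideanCLM (𝕜 := ℝ) S x⟫ / smoothNorm δ x ^ 3 ≤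
      (⨆ i, hS.1.eigenvalues i) / smoothNorm δ x := by
    calc ⟪x, toEuclideanCLM (𝕜 := ℝ) S x⟫ / smoothNorm δ x ^ 3
        ≤ (⨆ i, hS.1.eigenvalues i) * ‖x‖ ^ 2 / smoothNorm δ x ^ 3 := by
          gcongr
          exact inner_toEuclideanCLM_self_le hS.1 x
      _ ≤ (⨆ i, hS.1.eigenvalues i) * smoothNorm δ x ^ 2 / smoothNorm δ x ^ 3 := by
          gcongr
          exact norm_le_smoothNorm δ x
      _ = (⨆ i, hS.1.eigenvalues i) / smoothNorm δ x := by field_simp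
  rw [trace_smoothUnitFDeriv_comp, trace_toEuclideanCLM, sub_div]
  exact sub_le_sub_left hinner _

lemma integrable_smoothNorm (δ : ℝ) : Integrable (smoothNorm δ) (multivariateGaussian m S) := by
  have hnorm : Integrable (fun x ↦ ‖x‖ + |δ|) (multivariateGaussian m S) :=
    (IsGaussian.integrable_id.norm).add (integrable_const _)
  refine hnorm.mono' (continuous_smoothNorm δ).aestronglyMeasurable (.of_forall fun x ↦ ?_)
  rw [norm_of_nonneg (smoothNorm_nonneg δ x)]
  exact smoothNorm_le_norm_add_abs δ x

lemma integral_smoothNorm_le (hS : S.PosSemidef) {δ : ℝ} (hδ : 0 ≤ δ) :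
    ∫ x, smoothNorm δ x ∂multivariateGaussian m S ≤ ‖m‖ + √S.trace + δ := by
  have hsub : MemLp (fun x ↦ ‖x - m‖) 2 (multivariateGaussian m S) :=
    (memLp_sub_multivariateGaussian (by simp)).norm
  have hint := hsub.integrable one_le_two
  calc ∫ x, smoothNorm δ x ∂multivariateGaussian m S
      ≤ ∫ x, (‖x - m‖ + (‖m‖ + δ)) ∂multivariateGaussian m S := by
        refine integral_mono (integrable_smoothNorm δ) (hint.add (integrable_const _)) fun x ↦ ?_
        linarith [smoothNorm_le_norm_add_abs δ x, abs_of_nonneg hδ, norm_le_norm_sub_add x m]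
    _ = ∫ x, ‖x - m‖ ∂multivariateGaussian m S + (‖m‖ + δ) := by
        rw [integral_add hint (integrable_const _)]
        simp
    _ ≤ √S.trace + (‖m‖ + δ) := by
        grw [integral_le_sqrt_integral_sq hsub, integral_norm_sub_sq_multivariateGaussian hS]
    _ = ‖m‖ + √S.trace + δ := by ring

lemma div_le_integral_inner_smoothUnit (hS : S.PosSemidef) {δ : ℝ} (hδ : 0 < δ) :
    (S.trace - ⨆ i, hS.1.eigenvalues i) / (‖m‖ + √S.trace + δ) ≤
      ∫ x, ⟪smoothUnit δ x, x - m⟫ ∂multivariateGaussian m S := by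
  have hinv : Integrable (fun x ↦ (smoothNorm δ x)⁻¹) (multivariateGaussian m S) := by
    refine .of_bound (continuous_smoothNorm δ).measurable.inv.aestronglyMeasurable δ⁻¹
      (.of_forall fun x ↦ ?_)
    rw [norm_inv, norm_of_nonneg (smoothNorm_nonneg δ x)]
    gcongr
    exact le_smoothNorm δ x
  have hderiv := integrable_smoothUnitFDeriv (μ := multivariateGaussian m S) hδ
  calc (S.trace - ⨆ i, hS.1.eigenvalues i) / (‖m‖ + √S.trace + δ)
      = (S.trace - ⨆ i, hS.1.eigenvalues i) * (‖m‖ + √S.trace + δ)⁻¹ := div_eq_mul_inv _ _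
    _ ≤ (S.trace - ⨆ i, hS.1.eigenvalues i) *
          ∫ x, (smoothNorm δ x)⁻¹ ∂multivariateGaussian m S := by
        gcongr
        · exact sub_nonneg.mpr (iSup_eigenvalues_le_trace hS)
        · exact inv_le_integral_inv (smoothNorm_pos hδ.ne') (integrable_smoothNorm δ) hinv
            (by positivity) (integral_smoothNorm_le hS hδ.le)
    _ = ∫ x, (S.trace - ⨆ i, hS.1.eigenvalues i) / smoothNorm δ x ∂multivariateGaussian m S := by
        simp only [div_eq_mul_inv, integral_const_mul]
    _ ≤ ∫ x, LinearMap.trace ℝ (EuclideanSpace ℝ ι)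
          (smoothUnitFDeriv δ x ∘L toEuclideanCLM (𝕜 := ℝ) S) ∂multivariateGaussian m S :=
        integral_mono (hinv.const_mul _) (integrable_trace_comp hderiv _)
          (trace_sub_iSup_div_smoothNorm_le hS hδ.ne')
    _ = ∫ x, ⟪smoothUnit δ x, x - m⟫ ∂multivariateGaussian m S :=
        (integral_inner_sub_multivariateGaussian hS (hasFDerivAt_smoothUnit hδ.ne')
          (memLp_smoothUnit δ 2) hderiv).symm

lemma div_le_integral_inner_unit (hS : S.PosSemidef) (hS0 : S ≠ 0) :
    (S.trace - ⨆ i, hS.1.eigenvalues i) / (‖m‖ + √S.trace) ≤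
      ∫ x, ⟪‖x‖⁻¹ • x, x - m⟫ ∂multivariateGaussian m S := by
  have htrace := trace_pos_of_posSemidef hS hS0
  have hden : Tendsto (fun δ ↦ ‖m‖ + √S.trace + δ) (𝓝[>] 0) (𝓝 (‖m‖ + √S.trace)) := by
    have : Continuous fun δ : ℝ ↦ ‖m‖ + √S.trace + δ := by fun_prop
    simpa using (this.tendsto 0).mono_left nhdsWithin_le_nhds
  have hnum := (tendsto_integral_inner_smoothUnit (μ := multivariateGaussian m S)
    ((memLp_sub_multivariateGaussian (by simp)).integrable one_le_two)).mono_left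
    (nhdsWithin_le_nhds (s := Set.Ioi 0))
  refine le_of_tendsto_of_tendsto (tendsto_const_nhds.div hden (by positivity)) hnum ?_
  filter_upwards [self_mem_nhdsWithin] with δ hδ
  exact div_le_integral_inner_smoothUnit hS hδ

end MultivariateGaussian

lemma norm_shrink_sub_sq_le {E : Type*} [NormedAddCommGroup E] [InnerProductSpace ℝ E]
    (c : ℝ) (x m : E) :
    ‖(1 - c / ‖x‖) • x - m‖ ^ 2 ≤ ‖x - m‖ ^ 2 - 2 * c * ⟪‖x‖⁻¹ • x, x - m⟫ + c ^ 2 := by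
  have hunit : ‖‖x‖⁻¹ • x‖ ^ 2 ≤ 1 := by
    rw [← smoothUnit_zero_left]
    exact pow_le_one₀ (norm_nonneg _) (norm_smoothUnit_le_one 0 x)
  have hshrink : (1 - c / ‖x‖) • x - m = (x - m) - c • (‖x‖⁻¹ • x) := by
    rw [div_eq_mul_inv]
    module
  rw [hshrink, norm_sub_sq_real, norm_smul, mul_pow, norm_eq_abs, sq_abs, inner_smul_right,
    real_inner_comm]
  nlinarith [sq_nonneg c]

lemma integral_norm_shrink_sub_sq_le {E : Type*} [NormedAddCommGroup E] [InnerProductSpace ℝ E]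
    [MeasurableSpace E] [BorelSpace E] [SecondCountableTopology E] {μ : Measure E}
    [IsProbabilityMeasure μ] (c : ℝ) {m : E} (hm : MemLp (fun x ↦ x - m) 2 μ) :
    ∫ x, ‖(1 - c / ‖x‖) • x - m‖ ^ 2 ∂μ ≤
      (∫ x, ‖x - m‖ ^ 2 ∂μ) - 2 * c * ∫ x, ⟪‖x‖⁻¹ • x, x - m⟫ ∂μ + c ^ 2 := by
  have hsq : Integrable (fun x ↦ ‖x - m‖ ^ 2) μ := hm.integrable_norm_pow two_ne_zero
  have hinner : Integrable (fun x ↦ 2 * c * ⟪‖x‖⁻¹ • x, x - m⟫) μ := by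
    simpa only [smoothUnit_zero_left] using
      (integrable_inner_smoothUnit (hm.integrable one_le_two) 0).const_mul (2 * c)
  calc ∫ x, ‖(1 - c / ‖x‖) • x - m‖ ^ 2 ∂μ
      ≤ ∫ x, (‖x - m‖ ^ 2 - 2 * c * ⟪‖x‖⁻¹ • x, x - m⟫ + c ^ 2) ∂μ :=
        integral_mono_of_nonneg (.of_forall fun x ↦ sq_nonneg _)
          ((hsq.sub hinner).add (integrable_const _))
          (.of_forall fun x ↦ norm_shrink_sub_sq_le c x m)
    _ = (∫ x, ‖x - m‖ ^ 2 ∂μ) - 2 * c * ∫ x, ⟪‖x‖⁻¹ • x, x - m⟫ ∂μ + c ^ 2 := by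
        rw [integral_add (by fun_prop) (by fun_prop), integral_sub hsq hinner, integral_const_mul]
        simp

lemma multiGaussian_eq_multivariateGaussian {d : ℕ} (m : EuclideanSpace ℝ (Fin d))
    {S : Matrix (Fin d) (Fin d) ℝ} (hS : S.PosDef) :
    multiGaussian d m S = multivariateGaussian m S := by
  set A := toEuclideanCLM (𝕜 := ℝ) (CFC.sqrt S)
  have hdet : A.det = √S.det := det_toEuclideanCLM_sqrt hS.posSemidef
  have hdet0 : A.det ≠ 0 := hdet ▸ (sqrt_pos.mpr hS.det_pos).ne'
  have hscale : S.det ^ (-(1 : ℝ) / 2) = |A.det⁻¹| := by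
    rw [hdet, abs_of_nonneg (by positivity), neg_div, rpow_neg hS.det_pos.le, sqrt_eq_rpow]
  have hquad (z : EuclideanSpace ℝ (Fin d)) :
      ∑ i, ∑ k, ((m + A z) i - m i) * S⁻¹ i k * ((m + A z) k - m k) = ‖z‖ ^ 2 := by
    rw [← inner_toEuclideanCLM_inv_sqrt hS z]
    simp [A, Matrix.inner_toEuclideanCLM, dotProduct, Matrix.mulVec, Finset.mul_sum, mul_assoc]
  have hdensity (z : EuclideanSpace ℝ (Fin d)) :
      ENNReal.ofReal ((2 * π) ^ (-(d : ℝ) / 2) * S.det ^ (-(1 : ℝ) / 2) *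
        exp (-(∑ i, ∑ k, ((m + A z) i - m i) * S⁻¹ i k * ((m + A z) k - m k)) / 2)) =
      ENNReal.ofReal |A.det⁻¹| * ENNReal.ofReal (stdGaussianPDF z) := by
    rw [hquad, hscale, ← ENNReal.ofReal_mul (abs_nonneg _), stdGaussianPDF,
      finrank_euclideanSpace_fin]
    ring_nf
  have hscaled : ENNReal.ofReal |A.det⁻¹| • multiGaussian d m S =
      ENNReal.ofReal |A.det⁻¹| • multivariateGaussian m S := by
    rw [multiGaussian, ← withDensity_smul_measure, ← map_const_add_linearMap_volume m hdet0,
      ← map_withDensity_comp _ (by fun_prop) (by fun_prop)]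
    simp only [Function.comp_def, hdensity]
    rw [multivariateGaussian, ← withDensity_stdGaussianPDF, ← Measure.map_smul,
      ← withDensity_smul _ measurable_ofReal_stdGaussianPDF]
    rfl
  ext s
  exact (ENNReal.mul_right_inj (by simpa) ENNReal.ofReal_ne_top).mp (DFunLike.congr_fun hscaled s)

theorem shrinkage_strict_improvement_general {ι : Type*} [Fintype ι] [DecidableEq ι]
    (m : EuclideanSpace ℝ ι) {S : Matrix ι ι ℝ} (hS : S.PosSemidef) (hS0 : S ≠ 0) {r : ℝ}
    (hr : ‖m‖ ≤ r) :
    let c := (S.trace - ⨆ i, hS.1.eigenvalues i) / (r + √S.trace)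
    ∫ x, ‖(1 - c / ‖x‖) • x - m‖ ^ 2 ∂multivariateGaussian m S ≤
      (∫ x, ‖x - m‖ ^ 2 ∂multivariateGaussian m S) - c ^ 2 := by
  intro c
  have hnum : 0 ≤ S.trace - ⨆ i, hS.1.eigenvalues i :=
    sub_nonneg.mpr (iSup_eigenvalues_le_trace hS)
  have htrace := trace_pos_of_posSemidef hS hS0
  have hr0 : 0 ≤ r := (norm_nonneg m).trans hr
  have hc : 0 ≤ c := by positivity
  have hdir : c ≤ ∫ x, ⟪‖x‖⁻¹ • x, x - m⟫ ∂multivariateGaussian m S :=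
    (div_le_div_of_nonneg_left hnum (by positivity) (by gcongr)).trans
      (div_le_integral_inner_unit hS hS0)
  have hrisk := integral_norm_shrink_sub_sq_le c
    (memLp_sub_multivariateGaussian (m := m) (S := S) (by simp))
  nlinarith [mul_le_mul_of_nonneg_left hdir hc]

/-- Strict non-asymptotic improvement of the shrinkage estimator `(1 - c/|X|) X` over `X`
for a nondegenerate Gaussian vector `X` in `ℝ^d` (`d ≥ 2`), with shrinkage constant
`c = (tr Σ - λ_max(Σ))/(r + (tr Σ)^{1/2})` and `r ≥ |m|`:
`E|(1 - c/|X|)X - m|² ≤ E|X - m|² - c²`. -/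
theorem shrinkage_strict_improvement (d : ℕ) (hd : 2 ≤ d)
    (m : EuclideanSpace ℝ (Fin d)) (S : Matrix (Fin d) (Fin d) ℝ)
    (hS : S.PosDef) (r : ℝ) (hr : ‖m‖ ≤ r) :
    let c := (S.trace - ⨆ i, hS.1.eigenvalues i) / (r + Real.sqrt S.trace)
    ∫ x, ‖(1 - c / ‖x‖) • x - m‖ ^ 2 ∂(multiGaussian d m S)
      ≤ (∫ x, ‖x - m‖ ^ 2 ∂(multiGaussian d m S)) - c ^ 2 := by
  have : NeZero d := ⟨by lia⟩
  rw [multiGaussian_eq_multivariateGaussian m hS]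
  exact shrinkage_strict_improvement_general m hS.posSemidef hS.isUnit.ne_zero hr
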